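/- With the hitting-times setup below, lim_{i→∞} (t_{2i+2} − t_{2i})/(t_{2i} − t_{2i−2}) = δ. (Corollary 6.2(3).) -/

import Mathlib

open Real Filter Topology

theorem log_ratio_aux (x y : ℕ → ℝ) (d ε M : ℝ) (hd : 0 < d) (hε : 0 < ε)
    (hx : ∀ i, 0 < x i) (hy : ∀ i, 0 < y i) (hx0 : Tendsto x atTop (𝓝 0))
    (h : ∀ i, |y i - (x i) ^ d| ≤ M * (x i) ^ (d * (1 + ε))) :
    Tendsto (fun i => Real.log (y i) / Real.log (x i)) atTop (𝓝 d) ∧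
      Tendsto y atTop (𝓝 0) := by
  have hpow : ∀ p : ℝ, 0 < p → Tendsto (fun i => (x i) ^ p) atTop (𝓝 0) := by
    intro p hp
    have := hx0.rpow_const (p := p) (Or.inr hp.le)
    rwa [Real.zero_rpow hp.ne'] at this
  have hL : Tendsto (fun i => Real.log (x i)) atTop atBot :=
    Real.tendsto_log_nhdsGT_zero.comp
      (tendsto_nhdsWithin_iff.2 ⟨hx0, Eventually.of_forall hx⟩)
  have hr : Tendsto (fun i => y i / (x i) ^ d) atTop (𝓝 1) := by
    rw [tendsto_iff_norm_sub_tendsto_zero]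
    refine squeeze_zero (fun i => norm_nonneg _) (fun i => ?_)
      (g := fun i => M * (x i) ^ (d * ε)) ?_
    · have hp : 0 < (x i) ^ d := Real.rpow_pos_of_pos (hx i) d
      have e : y i / (x i) ^ d - 1 = (y i - (x i) ^ d) / (x i) ^ d := by
        field_simp
      rw [e, Real.norm_eq_abs, abs_div, abs_of_pos hp, div_le_iff₀ hp, mul_assoc,
        ← Real.rpow_add (hx i)]
      have := h i
      rwa [show d * (1 + ε) = d * ε + d by ring] at this
    · simpa using (hpow (d * ε) (by positivity)).const_mul M
  constructor
  · have h1 : Tendsto (fun i => Real.log (y i / (x i) ^ d)) atTop (𝓝 0) := by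
      simpa using hr.log one_ne_zero
    have h2 := (h1.div_atBot hL).add_const d
    rw [zero_add] at h2
    refine h2.congr' ?_
    filter_upwards [hL.eventually_lt_atBot 0] with i hi
    have hp : 0 < (x i) ^ d := Real.rpow_pos_of_pos (hx i) d
    rw [Real.log_div (hy i).ne' hp.ne', Real.log_rpow (hx i)]
    have := hi.ne
    field_simp
    ring
  · have := hr.mul (hpow d hd)
    rw [mul_zero] at this
    refine this.congr fun i => ?_
    have hp : 0 < (x i) ^ d := Real.rpow_pos_of_pos (hx i) d
    field_simp

/-- Hitting-times setup for an orbit in the basin of a Bykov attractor: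
`z i` and `ρ i` are the height and radial coordinates of the successive hits
at the cross sections, and `t` is the sequence of hitting times. -/
theorem stmt_6
    (C₁ E₁ C₂ E₂ a ε M : ℝ)
    (hC₁ : C₁ > E₁) (hE₁ : E₁ > 0) (hC₂ : C₂ > E₂) (hE₂ : E₂ > 0)
    (ha : a ∈ Set.Ioo (0:ℝ) 1) (hε : ε ∈ Set.Ioo (0:ℝ) 1) (hM : M > 0)
    (z ρ S U t : ℕ → ℝ)
    (hz01 : ∀ i, z i ∈ Set.Ioo (0:ℝ) 1) (hρ01 : ∀ i, ρ i ∈ Set.Ioo (0:ℝ) 1)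
    (hzlim : Tendsto z atTop (𝓝 0))
    (hρdef : ∀ i, ρ i = (a * z i) ^ (C₁/E₁) + S i)
    (hS : ∀ i, |S i| ≤ M * (a * z i) ^ ((C₁/E₁) * (1+ε)))
    (hzdef : ∀ i, z (i+1) = (ρ i) ^ (C₂/E₂) + U i)
    (hU : ∀ i, |U i| ≤ M * (ρ i) ^ ((C₂/E₂) * (1+ε)))
    (ht0 : t 0 = 0)
    (htodd : ∀ i, t (2*i+1) - t (2*i) = -(1/E₁) * Real.log (a * z i))
    (hteven : ∀ i, t (2*i+2) - t (2*i+1) = -(1/E₂) * Real.log (ρ i)) :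
    Tendsto (fun i => (t (2*i+2) - t (2*i)) / (t (2*i) - t (2*i-2)))
      atTop (𝓝 ((C₁/E₁) * (C₂/E₂))) := by
  obtain ⟨ha0, ha1⟩ := ha
  obtain ⟨hε0, hε1⟩ := hε
  have hC₁0 : 0 < C₁ := hE₁.trans hC₁
  have hC₂0 : 0 < C₂ := hE₂.trans hC₂
  have hz0 : ∀ i, 0 < z i := fun i => (hz01 i).1
  have hρ0 : ∀ i, 0 < ρ i := fun i => (hρ01 i).1
  have hx0 : ∀ i, 0 < a * z i := fun i => mul_pos ha0 (hz0 i)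
  have hxlim : Tendsto (fun i => a * z i) atTop (𝓝 0) := by
    simpa using hzlim.const_mul a
  have hLneg : ∀ i, Real.log (a * z i) < 0 := fun i =>
    Real.log_neg (hx0 i) (by nlinarith [(hz01 i).2, hz0 i])
  have hRneg : ∀ i, Real.log (ρ i) < 0 := fun i => Real.log_neg (hρ0 i) (hρ01 i).2
  have hZneg : ∀ i, Real.log (z i) < 0 := fun i => Real.log_neg (hz0 i) (hz01 i).2
  obtain ⟨h1, hρlim⟩ := log_ratio_aux (fun i => a * z i) ρ (C₁/E₁) ε M (by positivity) hε0
    hx0 hρ0 hxlim (fun i => by simpa [hρdef i] using hS i)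
  obtain ⟨h2, -⟩ := log_ratio_aux ρ (fun i => z (i+1)) (C₂/E₂) ε M (by positivity) hε0
    hρ0 (fun i => hz0 _) hρlim (fun i => by
      have := hU i
      rwa [show U i = z (i+1) - (ρ i) ^ (C₂/E₂) by rw [hzdef i]; ring] at this)
  have hZbot : Tendsto (fun i => Real.log (z i)) atTop atBot :=
    Real.tendsto_log_nhdsGT_zero.comp
      (tendsto_nhdsWithin_iff.2 ⟨hzlim, Eventually.of_forall hz0⟩)
  have h3 : Tendsto (fun i => Real.log (a * z i) / Real.log (z i)) atTop (𝓝 1) := by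
    have := (hZbot.const_div_atBot (Real.log a)).add_const 1
    rw [zero_add] at this
    refine this.congr fun i => ?_
    have hne := (hZneg i).ne
    rw [Real.log_mul ha0.ne' (hz0 i).ne']
    field_simp
  have h4 : Tendsto (fun i => Real.log (a * z (i+1)) / Real.log (a * z i)) atTop
      (𝓝 ((C₁/E₁) * (C₂/E₂))) := by
    have := (h1.mul h2).mul (h3.comp (tendsto_add_atTop_nat 1))
    rw [mul_one] at this
    refine this.congr fun i => ?_
    have n1 := (hLneg i).ne
    have n2 := (hRneg i).ne
    have n3 := (hZneg (i+1)).ne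
    simp only [Function.comp]
    field_simp
  have hc : Tendsto (fun i => (1/E₁) + (1/E₂) * (Real.log (ρ i) / Real.log (a * z i))) atTop
      (𝓝 ((1/E₁) + (1/E₂) * (C₁/E₁))) := (h1.const_mul _).const_add _
  have hcne : (1/E₁) + (1/E₂) * (C₁/E₁) ≠ 0 := by positivity
  have h5 := h4.mul ((hc.comp (tendsto_add_atTop_nat 1)).div hc hcne)
  rw [div_self hcne, mul_one] at h5
  have hT : ∀ i, t (2*i+2) - t (2*i) = -(Real.log (a * z i) *
      ((1/E₁) + (1/E₂) * (Real.log (ρ i) / Real.log (a * z i)))) := by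
    intro i
    have e : t (2*i+2) - t (2*i) =
      -(1/E₁) * Real.log (a * z i) + -(1/E₂) * Real.log (ρ i) := by
      rw [← htodd i, ← hteven i]; ring
    rw [e]
    have n1 := (hLneg i).ne
    field_simp
    ring
  rw [← tendsto_add_atTop_iff_nat 1]
  refine h5.congr fun i => ?_
  have e2 : t (2*(i+1)) - t (2*(i+1)-2) = t (2*i+2) - t (2*i) := by
    rw [show 2*(i+1)-2 = 2*i by omega, show 2*(i+1) = 2*i+2 by ring]
  rw [e2, hT, hT, neg_div_neg_eq]
  simp only [Function.comp, Pi.div_apply]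
  rw [mul_div_mul_comm]
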